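/- Let P, Q ∈ ℂ[X] be coprime polynomials with n = max(deg P, deg Q) ≥ 1, defining the rational map R = P/Q : ℂP¹ → ℂP¹ of degree n. For a ∈ ℂ let ν(a) be the number of distinct complex roots of P − a·Q, plus 1 if deg(P − a·Q) < n (accounting for the preimage at infinity), and let ν(∞) be the number of distinct complex roots of Q, plus 1 if deg Q < n. Then ν(0) + ν(1) + ν(∞) ≥ n + 2 (equivalently, m := ν(0) + ν(1) + ν(∞) − n − 2 ≥ 0). Moreover, equality ν(0) + ν(1) + ν(∞) = n + 2 holds if and only if ν(a) = n for every a ∈ ℂ \ {0, 1}, i.e. if and only if R has no critical values outside {0, 1, ∞}. -/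

import Mathlib

open Polynomial

/-!
Let `W` be the Wronskian of `P` and `Q`. It is unchanged when `(P, Q)` is replaced by `(P - a Q, Q)`
or `(Q, -P)`, so for every value `v` of `R = P / Q` the order of vanishing of `W` at a point of the
fibre over `v` is one less than the multiplicity of that point in the fibre; this includes the point
at infinity once `W` is read as a form of degree `2n - 2`. Since the fibre has `n` points with
multiplicity, `ν(v) + #{zeros of W lying over v} = n`. As `W` has `2n - 2` zeros, summing over a
finite set `S` of values gives `∑_{v ∈ S} ν(v) ≥ |S| n - (2n - 2)`, with equality iff all zeros of
`W` lie over `S`. The theorem is the case `S = {0, 1, ∞}`.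
-/

open scoped OnePoint

theorem sum_count_eq_countP_mem {α : Type*} [DecidableEq α] (S : Finset α) (s : Multiset α) :
    ∑ a ∈ S, s.count a = s.countP (· ∈ S) := by
  rw [Multiset.countP_eq_card_filter,
    ← Multiset.sum_count_eq_card fun a ha => (Multiset.mem_filter.1 ha).2]
  exact Finset.sum_congr rfl fun a ha => (Multiset.count_filter_of_pos ha).symm

section Coefficients

variable {R : Type*} [CommSemiring R] {F G : R[X]}

theorem coeff_eq_zero_iff_natDegree_lt {n : ℕ} (hF : F ≠ 0) (hFn : F.natDegree ≤ n) :
    F.coeff n = 0 ↔ F.natDegree < n := by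
  refine ⟨fun h => hFn.lt_of_ne ?_, coeff_eq_zero_of_natDegree_lt⟩
  rintro rfl
  exact hF (leadingCoeff_eq_zero.1 h)

theorem coeff_natDegree_ne_zero_or_of_isCoprime [Nontrivial R] (h : IsCoprime F G)
    (hGF : G.natDegree ≤ F.natDegree) :
    F.coeff F.natDegree ≠ 0 ∨ G.coeff F.natDegree ≠ 0 := by
  obtain rfl | hF := eq_or_ne F 0
  · have hG : IsUnit G := isCoprime_zero_left.1 h
    rw [← le_antisymm hGF (Nat.zero_le _)]
    exact .inr (leadingCoeff_ne_zero.2 hG.ne_zero)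
  · exact .inl (leadingCoeff_ne_zero.2 hF)

theorem coeff_X_mul_derivative (F : R[X]) (k : ℕ) :
    (X * derivative F).coeff k = k * F.coeff k := by
  obtain _ | k := k
  · simp
  · rw [coeff_X_mul, coeff_derivative, mul_comm, Nat.cast_succ]

theorem natDegree_X_mul_derivative_le (F : R[X]) : (X * derivative F).natDegree ≤ F.natDegree := by
  refine natDegree_le_iff_coeff_eq_zero.2 fun k hk => ?_
  rw [coeff_X_mul_derivative, coeff_eq_zero_of_natDegree_lt hk, mul_zero]

end Coefficients

section Wronskian

variable {R : Type*} [CommRing R]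

-- The factor `X` turns `derivative` into the Euler operator, which is diagonal on monomials.
theorem X_mul_wronskian (F G : R[X]) :
    X * wronskian F G = F * (X * derivative G) - X * derivative F * G := by
  rw [wronskian]
  ring

variable {F G : R[X]} {k l : ℕ}

theorem natDegree_X_mul_wronskian_le (hF : F.natDegree ≤ k) (hG : G.natDegree ≤ l) :
    (X * wronskian F G).natDegree ≤ k + l := by
  rw [X_mul_wronskian, ← max_self (k + l)]
  exact natDegree_sub_le_of_le
    (natDegree_mul_le_of_le hF ((natDegree_X_mul_derivative_le G).trans hG))
    (natDegree_mul_le_of_le ((natDegree_X_mul_derivative_le F).trans hF) hG)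

theorem coeff_X_mul_wronskian (hF : F.natDegree ≤ k) (hG : G.natDegree ≤ l) :
    (X * wronskian F G).coeff (k + l) = (l - k) * (F.coeff k * G.coeff l) := by
  rw [X_mul_wronskian, coeff_sub,
    coeff_mul_add_eq_of_natDegree_le hF ((natDegree_X_mul_derivative_le G).trans hG),
    coeff_mul_add_eq_of_natDegree_le ((natDegree_X_mul_derivative_le F).trans hF) hG,
    coeff_X_mul_derivative, coeff_X_mul_derivative]
  ring

theorem natDegree_wronskian_le (hF : F.natDegree ≤ k) (hG : G.natDegree ≤ k) :
    (wronskian F G).natDegree ≤ 2 * k - 2 := by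
  refine natDegree_le_iff_coeff_eq_zero.2 fun j hj => ?_
  rw [← coeff_X_mul]
  obtain hlt | rfl | heq : k + k < j + 1 ∨ k = 0 ∨ j + 1 = k + k := by lia
  · exact coeff_eq_zero_of_natDegree_lt ((natDegree_X_mul_wronskian_le hF hG).trans_lt hlt)
  · exact coeff_eq_zero_of_natDegree_lt
      ((natDegree_X_mul_wronskian_le hF hG).trans_lt j.succ_pos)
  · rw [heq, coeff_X_mul_wronskian hF hG, sub_self, zero_mul]

variable [IsDomain R] [CharZero R]

theorem wronskian_ne_zero_of_isCoprime (hFG : IsCoprime F G)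
    (hpos : 0 < max F.natDegree G.natDegree) : wronskian F G ≠ 0 := by
  rw [Ne, hFG.wronskian_eq_zero_iff, derivative_eq_zero, derivative_eq_zero]
  lia

theorem natDegree_wronskian_add_one (hF : F ≠ 0) (hlt : F.natDegree < k) (hG : G.natDegree ≤ k)
    (hGk : G.coeff k ≠ 0) : (wronskian F G).natDegree + 1 = F.natDegree + k := by
  have hcoeff : (X * wronskian F G).coeff (F.natDegree + k) ≠ 0 := by
    rw [coeff_X_mul_wronskian le_rfl hG]
    exact mul_ne_zero (sub_ne_zero.2 (Nat.cast_injective.ne hlt.ne'))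
      (mul_ne_zero (leadingCoeff_ne_zero.2 hF) hGk)
  have hW : wronskian F G ≠ 0 := fun h => hcoeff (by rw [h, mul_zero, coeff_zero])
  rw [← natDegree_X_mul hW]
  exact natDegree_eq_of_le_of_coeff_ne_zero (natDegree_X_mul_wronskian_le le_rfl hG) hcoeff

theorem rootMultiplicity_wronskian_add_one {z : R} (hF : F ≠ 0) (hFz : F.IsRoot z)
    (hGz : ¬ G.IsRoot z) :
    (wronskian F G).rootMultiplicity z + 1 = F.rootMultiplicity z := by
  obtain ⟨m, hm⟩ : ∃ m, F.rootMultiplicity z = m + 1 :=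
    Nat.exists_eq_add_one_of_ne_zero ((rootMultiplicity_pos hF).2 hFz).ne'
  have hF' : derivative F ≠ 0 := fun h => by
    rw [eq_C_of_derivative_eq_zero h, rootMultiplicity_C] at hm
    exact m.succ_ne_zero hm.symm
  have hG : G ≠ 0 := by
    rintro rfl
    exact hGz eval_zero
  have hF'G : (derivative F * G).rootMultiplicity z = m := by
    rw [rootMultiplicity_mul (mul_ne_zero hF' hG), derivative_rootMultiplicity_of_root hFz,
      rootMultiplicity_eq_zero hGz, hm, add_zero, Nat.add_sub_cancel]
  have hFG' : (X - C z) ^ (m + 1) ∣ F * derivative G :=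
    hm ▸ (pow_rootMultiplicity_dvd F z).mul_right _
  have hdvd_iff : ∀ j ≤ m + 1, (X - C z) ^ j ∣ wronskian F G ↔ j ≤ m := fun j hj => by
    rw [wronskian, dvd_sub_right ((pow_dvd_pow _ hj).trans hFG'), ← hF'G,
      le_rootMultiplicity_iff (mul_ne_zero hF' hG)]
  have hW : wronskian F G ≠ 0 := fun h =>
    m.lt_irrefl ((hdvd_iff (m + 1) le_rfl).1 (h ▸ dvd_zero _))
  rw [hm, Nat.add_right_cancel_iff]
  refine le_antisymm ?_ ((le_rootMultiplicity_iff hW).2 ((hdvd_iff m m.le_succ).2 le_rfl))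
  rw [← Nat.lt_succ_iff, ← not_le, le_rootMultiplicity_iff hW, hdvd_iff _ le_rfl]
  exact m.not_succ_le_self

end Wronskian

section ProjectiveLine

variable {K : Type*} [Field K]

/-- The value at a point of the projective line `OnePoint K` of the binary form of degree `n`
obtained by homogenizing `F`, in the coordinates `(z : 1)` of a finite point `z` and `(1 : 0)` of
`∞`. It is meaningful when `F.natDegree ≤ n`. -/
def projEval (n : ℕ) (F : K[X]) : OnePoint K → K
  | ∞ => F.coeff n
  | (z : K) => F.eval z

/-- The zeros on the projective line, with multiplicity, of the binary form of degree `n` obtained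
by homogenizing `F`; at `∞` the form vanishes to order `n - F.natDegree`. It is meaningful when
`F ≠ 0` and `F.natDegree ≤ n`. -/
noncomputable def projRoots (n : ℕ) (F : K[X]) : Multiset (OnePoint K) :=
  F.roots.map (↑) + Multiset.replicate (n - F.natDegree) ∞

variable {n : ℕ} {F G : K[X]}

theorem projEval_neg (n : ℕ) (F : K[X]) (x : OnePoint K) :
    projEval n (-F) x = -projEval n F x := by
  induction x
  · exact coeff_neg F n
  · exact eval_neg F _

theorem mem_projRoots (hF : F ≠ 0) (hFn : F.natDegree ≤ n) {x : OnePoint K} :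
    x ∈ projRoots n F ↔ projEval n F x = 0 := by
  induction x with
  | infty =>
    simp [projRoots, projEval, coeff_eq_zero_iff_natDegree_lt hF hFn, Multiset.mem_replicate,
      Nat.sub_eq_zero_iff_le]
  | coe z => simp [projRoots, projEval, hF, Multiset.mem_replicate]

theorem card_projRoots [IsAlgClosed K] (hFn : F.natDegree ≤ n) : (projRoots n F).card = n := by
  rw [projRoots, Multiset.card_add, Multiset.card_map, Multiset.card_replicate,
    ← (IsAlgClosed.splits F).natDegree_eq_card_roots, Nat.add_sub_cancel' hFn]

theorem projEval_ne_zero_or_of_isCoprime (h : IsCoprime F G)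
    (hn : n = max F.natDegree G.natDegree) (x : OnePoint K) :
    projEval n F x ≠ 0 ∨ projEval n G x ≠ 0 := by
  induction x with
  | infty =>
    obtain hle | hle := le_total G.natDegree F.natDegree
    · rw [hn, max_eq_left hle]
      exact coeff_natDegree_ne_zero_or_of_isCoprime h hle
    · rw [hn, max_eq_right hle]
      exact (coeff_natDegree_ne_zero_or_of_isCoprime h.symm hle).symm
  | coe z => exact aeval_ne_zero_of_isCoprime h z

variable [DecidableEq (OnePoint K)]

theorem count_projRoots_infty (n : ℕ) (F : K[X]) :
    (projRoots n F).count ∞ = n - F.natDegree := by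
  rw [projRoots, Multiset.count_add, Multiset.count_replicate_self,
    Multiset.count_eq_zero_of_notMem (by simp), zero_add]

theorem count_projRoots_coe (n : ℕ) (F : K[X]) (z : K) :
    (projRoots n F).count ↑z = F.rootMultiplicity z := by
  classical
  rw [projRoots, Multiset.count_add, Multiset.count_map_eq_count' _ _ OnePoint.coe_injective,
    count_roots, Multiset.count_eq_zero_of_notMem (by simp [Multiset.mem_replicate]), add_zero]

theorem card_toFinset_projRoots [DecidableEq K] (n : ℕ) (F : K[X]) :
    (projRoots n F).toFinset.card =
      F.roots.toFinset.card + if F.natDegree < n then 1 else 0 := by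
  have hroots : (F.roots.map ((↑) : K → OnePoint K)).toFinset.card = F.roots.toFinset.card := by
    rw [Multiset.toFinset_map, Finset.card_image_of_injective _ OnePoint.coe_injective]
  split_ifs with hlt
  · rw [projRoots, Multiset.toFinset_add, Multiset.toFinset_replicate,
      if_neg (Nat.sub_ne_zero_of_lt hlt), Finset.card_union_of_disjoint (by simp), hroots,
      Finset.card_singleton]
  · rw [projRoots, Nat.sub_eq_zero_of_le (not_lt.1 hlt), Multiset.replicate_zero, add_zero, hroots,
      add_zero]

theorem count_projRoots_wronskian_add_one [CharZero K] {x : OnePoint K} (hF : F ≠ 0)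
    (hFn : F.natDegree ≤ n) (hGn : G.natDegree ≤ n) (hFx : projEval n F x = 0)
    (hGx : projEval n G x ≠ 0) :
    (projRoots (2 * n - 2) (wronskian F G)).count x + 1 = (projRoots n F).count x := by
  induction x with
  | infty =>
    have hlt : F.natDegree < n := (coeff_eq_zero_iff_natDegree_lt hF hFn).1 hFx
    have hdeg := natDegree_wronskian_add_one hF hlt hGn hGx
    rw [count_projRoots_infty, count_projRoots_infty]
    lia
  | coe z =>
    rw [count_projRoots_coe, count_projRoots_coe]
    exact rootMultiplicity_wronskian_add_one hF hFx hGx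

end ProjectiveLine

section RationalFunction

variable {K : Type*} [Field K]

/-- The polynomial whose zeros, as a form of degree `n = max P.natDegree Q.natDegree`, are the
preimages of the given value under the rational function `P / Q`. -/
noncomputable def fiberPoly (P Q : K[X]) : OnePoint K → K[X]
  | ∞ => Q
  | (a : K) => P - C a * Q

variable {n : ℕ} {P Q : K[X]}

theorem natDegree_fiberPoly_le (hP : P.natDegree ≤ n) (hQ : Q.natDegree ≤ n) (v : OnePoint K) :
    (fiberPoly P Q v).natDegree ≤ n := by
  induction v with
  | infty => exact hQ
  | coe a =>
    rw [← max_self n]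
    exact natDegree_sub_le_of_le hP ((natDegree_C_mul_le a Q).trans hQ)

theorem projEval_fiberPoly_coe (n : ℕ) (P Q : K[X]) (a : K) (x : OnePoint K) :
    projEval n (fiberPoly P Q a) x = projEval n P x - a * projEval n Q x := by
  induction x <;> simp [projEval, fiberPoly]

-- `(fiberPoly P Q v, G)` is a unimodular change of basis of `(P, Q)`.
theorem exists_wronskian_fiberPoly_eq (hP : P.natDegree ≤ n) (hQ : Q.natDegree ≤ n)
    (hPQ : ∀ x, projEval n P x ≠ 0 ∨ projEval n Q x ≠ 0) (v : OnePoint K) :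
    ∃ G : K[X], wronskian (fiberPoly P Q v) G = wronskian P Q ∧ G.natDegree ≤ n ∧
      ∀ x, projEval n (fiberPoly P Q v) x = 0 → projEval n G x ≠ 0 := by
  induction v with
  | infty =>
    refine ⟨-P, ?_, (natDegree_neg P).trans_le hP, fun x hQx => ?_⟩
    · exact (wronskian_neg_right Q P).trans (wronskian_neg_eq Q P)
    · rw [projEval_neg, neg_ne_zero]
      exact (hPQ x).resolve_right (not_not_intro hQx)
  | coe a =>
    refine ⟨Q, ?_, hQ, fun x hx hQx => ?_⟩
    · simp only [fiberPoly, wronskian, derivative_sub, derivative_C_mul]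
      ring
    · rw [projEval_fiberPoly_coe, hQx, mul_zero, sub_zero] at hx
      exact (hPQ x).elim (absurd hx) (absurd hQx)

variable [DecidableEq K]

/-- The number `ν(v)` of distinct preimages of `v` on the projective line under the rational
function `P / Q`, where `n = max P.natDegree Q.natDegree`; the second summand counts `∞`. -/
noncomputable def preimageCount (n : ℕ) (P Q : K[X]) (v : OnePoint K) : ℕ :=
  (fiberPoly P Q v).roots.toFinset.card + if (fiberPoly P Q v).natDegree < n then 1 else 0

/-- The rational function `P / Q` as a self-map of the projective line, where
`n = max P.natDegree Q.natDegree`. -/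
noncomputable def ratValue (n : ℕ) (P Q : K[X]) (x : OnePoint K) : OnePoint K :=
  if projEval n Q x = 0 then ∞ else ↑(projEval n P x / projEval n Q x)

/-- The values of `P / Q` at its critical points, each repeated according to ramification: the
critical points are the zeros of the Wronskian as a form of degree `2 * n - 2`, where
`n = max P.natDegree Q.natDegree`. -/
noncomputable def branchValues (n : ℕ) (P Q : K[X]) : Multiset (OnePoint K) :=
  (projRoots (2 * n - 2) (wronskian P Q)).map (ratValue n P Q)

theorem ratValue_eq_iff {x : OnePoint K} (hPQ : projEval n P x ≠ 0 ∨ projEval n Q x ≠ 0)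
    (v : OnePoint K) : ratValue n P Q x = v ↔ projEval n (fiberPoly P Q v) x = 0 := by
  induction v with
  | infty => simp [ratValue, fiberPoly]
  | coe a =>
    rw [projEval_fiberPoly_coe, ratValue, sub_eq_zero]
    split_ifs with hQx
    · simpa [hQx] using hPQ
    · rw [OnePoint.coe_eq_coe, div_eq_iff hQx]

theorem card_branchValues [IsAlgClosed K] (hP : P.natDegree ≤ n) (hQ : Q.natDegree ≤ n) :
    (branchValues n P Q).card = 2 * n - 2 := by
  rw [branchValues, Multiset.card_map, card_projRoots (natDegree_wronskian_le hP hQ)]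

theorem count_branchValues [DecidableEq (OnePoint K)]
    (hPQ : ∀ x, projEval n P x ≠ 0 ∨ projEval n Q x ≠ 0) {v : OnePoint K}
    (hv : fiberPoly P Q v ≠ 0) (hvn : (fiberPoly P Q v).natDegree ≤ n) :
    (branchValues n P Q).count v = ∑ x ∈ (projRoots n (fiberPoly P Q v)).toFinset,
      (projRoots (2 * n - 2) (wronskian P Q)).count x := by
  rw [sum_count_eq_countP_mem, branchValues, Multiset.count_map, ← Multiset.countP_eq_card_filter]
  refine Multiset.countP_congr rfl fun x _ => ?_
  rw [Multiset.mem_toFinset, mem_projRoots hv hvn, ← ratValue_eq_iff (hPQ x),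
    eq_comm (a := v)]

theorem preimageCount_add_count_branchValues [CharZero K] [IsAlgClosed K]
    [DecidableEq (OnePoint K)] (hPQ : IsCoprime P Q) (hn : n = max P.natDegree Q.natDegree)
    (hpos : 0 < n) (v : OnePoint K) :
    preimageCount n P Q v + (branchValues n P Q).count v = n := by
  have hP : P.natDegree ≤ n := hn ▸ le_max_left _ _
  have hQ : Q.natDegree ≤ n := hn ▸ le_max_right _ _
  have hno_common_zero := projEval_ne_zero_or_of_isCoprime hPQ hn
  obtain ⟨G, hW, hGn, hG⟩ := exists_wronskian_fiberPoly_eq hP hQ hno_common_zero v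
  have hv : fiberPoly P Q v ≠ 0 := fun h => by
    rw [h, wronskian_zero_left] at hW
    exact wronskian_ne_zero_of_isCoprime hPQ (hn ▸ hpos) hW.symm
  have hvn := natDegree_fiberPoly_le hP hQ v
  set Z := projRoots n (fiberPoly P Q v)
  calc preimageCount n P Q v + (branchValues n P Q).count v
      = Z.toFinset.card + ∑ x ∈ Z.toFinset,
          (projRoots (2 * n - 2) (wronskian P Q)).count x := by
        rw [preimageCount, card_toFinset_projRoots, count_branchValues hno_common_zero hv hvn]
    _ = ∑ x ∈ Z.toFinset, ((projRoots (2 * n - 2) (wronskian P Q)).count x + 1) := by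
        rw [Finset.sum_add_distrib, Finset.card_eq_sum_ones, add_comm]
    _ = ∑ x ∈ Z.toFinset, Z.count x := by
        refine Finset.sum_congr rfl fun x hx => ?_
        have hx0 := (mem_projRoots hv hvn).1 (Multiset.mem_toFinset.1 hx)
        rw [← hW, count_projRoots_wronskian_add_one hv hvn hGn hx0 (hG x hx0)]
    _ = n := by rw [Multiset.toFinset_sum_count_eq, card_projRoots hvn]

theorem stmt_0_general [CharZero K] [IsAlgClosed K] (hPQ : IsCoprime P Q)
    (hn : n = max P.natDegree Q.natDegree) (hpos : 0 < n) (S : Finset (OnePoint K)) :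
    S.card * n + 2 ≤ ∑ v ∈ S, preimageCount n P Q v + 2 * n ∧
      (∑ v ∈ S, preimageCount n P Q v + 2 * n = S.card * n + 2 ↔
        ∀ v ∉ S, preimageCount n P Q v = n) := by
  classical
  set B := branchValues n P Q
  have hfiber := preimageCount_add_count_branchValues hPQ hn hpos
  have hcard : B.card = 2 * n - 2 :=
    card_branchValues (hn ▸ le_max_left _ _) (hn ▸ le_max_right _ _)
  have hle : B.countP (· ∈ S) ≤ B.card := Multiset.countP_le_card _ B
  have hsum : ∑ v ∈ S, preimageCount n P Q v + B.countP (· ∈ S) = S.card * n := by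
    rw [← sum_count_eq_countP_mem, ← Finset.sum_add_distrib, Finset.sum_congr rfl
      fun v _ => hfiber v, Finset.sum_const, smul_eq_mul]
  have hunbranched (v : OnePoint K) : preimageCount n P Q v = n ↔ v ∉ B := by
    rw [← Multiset.count_eq_zero]
    have := hfiber v
    lia
  refine ⟨by lia, ?_⟩
  calc ∑ v ∈ S, preimageCount n P Q v + 2 * n = S.card * n + 2
      ↔ B.countP (· ∈ S) = B.card := by lia
    _ ↔ ∀ v ∈ B, v ∈ S := Multiset.countP_eq_card
    _ ↔ ∀ v ∉ S, preimageCount n P Q v = n := by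
        simp only [hunbranched, not_imp_not]

end RationalFunction

/-- For a rational function `R = P/Q` of degree `n ≥ 1`, the total number of distinct
preimages of `0`, `1`, `∞` on the Riemann sphere is at least `n + 2`, with equality
iff `R` has no critical values outside `{0, 1, ∞}` (i.e. `R` is a Belyi function). -/
theorem stmt_0 (P Q : Polynomial ℂ) (hcop : IsCoprime P Q)
    (n : ℕ) (hn : n = max P.natDegree Q.natDegree) (hn1 : 1 ≤ n)
    (ν : ℂ → ℕ) (νinf : ℕ)
    (hν : ∀ a : ℂ, ν a =
      (P - Polynomial.C a * Q).roots.toFinset.card +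
        (if (P - Polynomial.C a * Q).natDegree < n then 1 else 0))
    (hνinf : νinf = Q.roots.toFinset.card + (if Q.natDegree < n then 1 else 0)) :
    n + 2 ≤ ν 0 + ν 1 + νinf ∧
      (ν 0 + ν 1 + νinf = n + 2 ↔ ∀ a : ℂ, a ≠ 0 → a ≠ 1 → ν a = n) := by
  classical
  replace hν : ∀ a : ℂ, preimageCount n P Q a = ν a := fun a => (hν a).symm
  replace hνinf : preimageCount n P Q ∞ = νinf := hνinf.symm
  let S : Finset (OnePoint ℂ) := {((0 : ℂ) : OnePoint ℂ), ((1 : ℂ) : OnePoint ℂ), ∞}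
  have hcard : S.card = 3 := by simp [S]
  have hsum : ∑ v ∈ S, preimageCount n P Q v = ν 0 + ν 1 + νinf := by
    simp [S, hν, hνinf, add_assoc]
  have hall : (∀ v ∉ S, preimageCount n P Q v = n) ↔ ∀ a : ℂ, a ≠ 0 → a ≠ 1 → ν a = n := by
    simp [S, hν, OnePoint.forall]
  have h := stmt_0_general hcop hn hn1 S
  rw [hcard, hsum, hall] at h
  exact ⟨by lia, .trans (by lia) h.2⟩
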